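/- arXiv:1903.00236 — 2 statements merged into one kernel-verified Lean document; each statement's English description precedes it below -/
import Mathlib

section
/- Suppose X is complete, A is closed, I and φ are lower semicontinuous on A, φ is continuous at every point of Ω, and there exist c > I*, λ₀ > 0 and δ > 0 such that (i) I is Lipschitz continuous on an open set containing S_{λ₀}(c) ∩ Ω_δ, (ii) there exists a > 0 such that φ↓_A(x) ≤ −a for all x ∈ S_{λ₀}(c) ∩ (Ω_δ \ Ω), and (iii) Φ_{λ₀} is bounded below on A. Then there exists λ* ≥ 0 such that for every λ ≥ λ*: inf_{x∈A} Φ_λ(x) = I*, and the set of global minimizers of Φ_λ on A coincides with the set of global minimizers of I on Ω. -/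
open Filter Metric Set Topology
open scoped ENNReal NNReal

/-- The rate of steepest descent of `g : X → EReal` with respect to the set `K` at `x`. -/
noncomputable def rateOfDescent {X : Type*} [MetricSpace X] (g : X → EReal) (K : Set X)
    (x : X) : EReal :=
  Filter.liminf (fun y => (g y - g x) * (((dist y x)⁻¹ : ℝ) : EReal)) (nhdsWithin x (K \ {x}))

/-- Ekeland variational principle (real-valued, on a closed set with closed sublevel sets). -/
theorem ekeland_aux {X : Type*} [MetricSpace X] [CompleteSpace X] (B : Set X) (f : X → ℝ)
    (hcl : ∀ r : ℝ, IsClosed {x | x ∈ B ∧ f x ≤ r}) (b : ℝ) (hb : ∀ x ∈ B, b ≤ f x)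
    (x0 : X) (hx0 : x0 ∈ B) :
    ∃ x1 ∈ B, f x1 + dist x0 x1 ≤ f x0 ∧ ∀ y ∈ B, f y + dist x1 y ≤ f x1 → y = x1 := by
  have step : ∀ (x : B) (n : ℕ), ∃ y : B, f y + dist x y ≤ f x ∧
      ∀ z ∈ B, f z + dist (x : X) z ≤ f x → f y ≤ f z + (1/2 : ℝ)^n := by
    intro x n
    let S : Set ℝ := f '' {z | z ∈ B ∧ f z + dist (x : X) z ≤ f x}
    have hne : S.Nonempty := ⟨f x, x, ⟨x.2, by simp⟩, rfl⟩
    have hbd : BddBelow S := ⟨b, by rintro _ ⟨z, hz, rfl⟩; exact hb z hz.1⟩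
    have hp : (0 : ℝ) < (1/2 : ℝ)^n := by positivity
    obtain ⟨_, ⟨y, hy, rfl⟩, hlt⟩ := exists_lt_of_csInf_lt hne
      (show sInf S < sInf S + (1/2 : ℝ)^n by linarith)
    refine ⟨⟨y, hy.1⟩, hy.2, fun z hz hz2 => ?_⟩
    have := csInf_le hbd ⟨z, ⟨hz, hz2⟩, rfl⟩
    linarith
  choose g hg1 hg2 using step
  obtain ⟨u, hu0, hu⟩ : ∃ u : ℕ → B, u 0 = ⟨x0, hx0⟩ ∧ ∀ n, u (n+1) = g (u n) n :=
    ⟨fun n => Nat.rec ⟨x0, hx0⟩ (fun n x => g x n) n, rfl, fun n => rfl⟩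
  have hmono : ∀ m k : ℕ, f (u (m+k) : X) + dist (u m : X) (u (m+k) : X) ≤ f (u m : X) := by
    intro m k
    induction k with
    | zero => simp
    | succ k ih =>
      have h1 := hg1 (u (m+k)) (m+k)
      rw [← hu, Subtype.dist_eq] at h1
      have := dist_triangle (u m : X) (u (m+k)) (u (m+k+1))
      rw [← add_assoc]
      linarith
  have hanti : Antitone (fun n => f (u n)) := by
    refine antitone_nat_of_succ_le fun n => ?_
    have := hmono n 1
    have := dist_nonneg (x := (u n : X)) (y := u (n+1))
    linarith
  have hbd : BddBelow (range (fun n => f (u n))) := ⟨b, by rintro _ ⟨n, rfl⟩; exact hb _ (u n).2⟩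
  have hlim := tendsto_atTop_ciInf hanti hbd
  set l := ⨅ n, f (u n) with hl
  have hle : ∀ n, l ≤ f (u n) := fun n => ciInf_le hbd n
  have hcau : CauchySeq (fun n => (u n : X)) := by
    refine cauchySeq_of_le_tendsto_0' (fun n => f (u n) - l) ?_ ?_
    · intro n m hnm
      obtain ⟨k, rfl⟩ := Nat.exists_eq_add_of_le hnm
      have := hmono n k
      have := hle (n+k)
      linarith
    · simpa using hlim.sub_const l
  obtain ⟨x1, hx1⟩ := cauchySeq_tendsto_of_complete hcau
  have key : ∀ m, x1 ∈ B ∧ f x1 ≤ f (u m) := fun m =>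
    (hcl (f (u m))).mem_of_tendsto hx1 (by
      filter_upwards [eventually_ge_atTop m] with n hn
      exact ⟨(u n).2, hanti hn⟩)
  have hx1l : f x1 ≤ l := le_ciInf fun m => (key m).2
  have hS : ∀ m, f x1 + dist (u m : X) x1 ≤ f (u m) := by
    intro m
    have : dist (u m : X) x1 ≤ f (u m) - l := by
      refine le_of_tendsto (tendsto_const_nhds.dist hx1) ?_
      filter_upwards [eventually_ge_atTop m] with n hn
      obtain ⟨k, rfl⟩ := Nat.exists_eq_add_of_le hn
      have := hmono m k
      have := hle (m+k)
      linarith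
    linarith
  refine ⟨x1, (key 0).1, by simpa [hu0] using hS 0, fun y hy hyx => ?_⟩
  have h3 : ∀ n, f x1 ≤ f y + (1/2 : ℝ)^n := by
    intro n
    have h := hg2 (u n) n y hy (by
      have := hS n
      have := dist_triangle (u n : X) x1 y
      linarith)
    rw [← hu] at h
    exact (key (n+1)).2.trans h
  have h4 : f x1 ≤ f y := by
    have ht : Tendsto (fun n : ℕ => f y + (1/2 : ℝ)^n) atTop (𝓝 (f y + 0)) :=
      (tendsto_pow_atTop_nhds_zero_of_lt_one (by norm_num) (by norm_num)).const_add _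
    simpa using ge_of_tendsto' ht h3
  have : dist x1 y ≤ 0 := by linarith
  exact (dist_le_zero.1 this).symm

theorem penalty_lsc_aux {X : Type*} [MetricSpace X] (A : Set X)
    (I : X → EReal) (hInotbot : ∀ x, I x ≠ ⊥) (φ : X → ℝ≥0∞)
    (hIlsc : LowerSemicontinuousOn I A) (hφlsc : LowerSemicontinuousOn φ A)
    (lam : ℝ) (hlam : 0 < lam) :
    LowerSemicontinuousOn (fun x => I x + (lam : EReal) * ((φ x : ℝ≥0∞) : EReal)) A := by
  have h1 : LowerSemicontinuousOn (fun x => (lam : EReal) * ((φ x : ℝ≥0∞) : EReal)) A := by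
    have : (fun x => (lam : EReal) * ((φ x : ℝ≥0∞) : EReal))
        = (fun t : ℝ≥0∞ => ((ENNReal.ofReal lam * t : ℝ≥0∞) : EReal)) ∘ φ := by
      ext x
      simp [EReal.coe_ennreal_mul, EReal.coe_ennreal_ofReal, max_eq_left hlam.le]
    rw [this]
    refine Continuous.comp_lowerSemicontinuousOn
      (continuous_coe_ennreal_ereal.comp (ENNReal.continuous_const_mul ENNReal.ofReal_ne_top))
      hφlsc ?_
    intro s t hst
    exact EReal.coe_ennreal_le_coe_ennreal_iff.2 (by gcongr)
  refine hIlsc.add' h1 fun x _ => EReal.continuousAt_add (Or.inr ?_) (Or.inl (hInotbot x))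
  have : (0 : EReal) ≤ (lam : EReal) * ((φ x : ℝ≥0∞) : EReal) :=
    mul_nonneg (by exact_mod_cast hlam.le) (EReal.coe_ennreal_nonneg _)
  intro h
  simp only at h
  rw [h] at this
  simp at this

theorem finite_aux (s : EReal) (hs : s ≠ ⊥) (p : ℝ≥0∞) (lam r : ℝ) (hlam : 0 < lam)
    (h : s + (lam : EReal) * (p : EReal) ≤ (r : EReal)) :
    ∃ (i q : ℝ), 0 ≤ q ∧ s = (i : EReal) ∧ p = ENNReal.ofReal q := by
  have hp : p ≠ ⊤ := by
    rintro rfl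
    rw [EReal.coe_ennreal_top, EReal.coe_mul_top_of_pos hlam, EReal.add_top_of_ne_bot hs] at h
    simp at h
  obtain ⟨q, rfl⟩ : ∃ q : ℝ≥0, p = q := ⟨p.toNNReal, by simp [hp]⟩
  have hs' : s ≠ ⊤ := by
    rintro rfl
    have h2 : (((q : ℝ≥0∞)) : EReal) = ((q : ℝ) : EReal) := rfl
    rw [h2, ← EReal.coe_mul, EReal.top_add_coe] at h
    simp at h
  exact ⟨s.toReal, q, q.2, (EReal.coe_toReal hs' hs).symm, by simp⟩

theorem coe_aux (i q lam : ℝ) (hq : 0 ≤ q) :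
    (i : EReal) + (lam : EReal) * ((ENNReal.ofReal q : ℝ≥0∞) : EReal)
      = ((i + lam * q : ℝ) : EReal) := by
  rw [EReal.coe_ennreal_ofReal, max_eq_left hq]; norm_cast

/-- Main theorem, parts 1 and 2: under the stated assumptions there exists `λ* ≥ 0` such that for
all `λ ≥ λ*` the optimal values of the penalised problem and of `(P)` coincide, and the global
minimisers of `Φ_λ` on `A` coincide with the global minimisers of `I` on `Ω = M ∩ A`. -/
theorem exact_penalty_optimal_values_and_global_minimisers
    {X : Type*} [MetricSpace X] [CompleteSpace X]
    (M A : Set X) (hA : IsClosed A)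
    (I : X → EReal) (hInotbot : ∀ x, I x ≠ ⊥)
    (φ : X → ℝ≥0∞) (hφM : ∀ x, φ x = 0 ↔ x ∈ M)
    (Φ : ℝ → X → EReal)
    (hΦdef : ∀ lam x, Φ lam x = I x + (lam : EReal) * ((φ x : ℝ≥0∞) : EReal))
    (hIlsc : LowerSemicontinuousOn I A) (hφlsc : LowerSemicontinuousOn φ A)
    (hφcont : ∀ x ∈ M ∩ A, ContinuousAt φ x)
    -- the problem (P) has a globally optimal solution with finite optimal value
    (xs : X) (hxs : xs ∈ M ∩ A) (hxsmin : ∀ y ∈ M ∩ A, I xs ≤ I y) (hxsfin : I xs ≠ ⊤)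
    (c lam₀ δ : ℝ) (hc : I xs < ((c : ℝ) : EReal)) (hlam₀ : 0 < lam₀) (hδ : 0 < δ)
    -- (i) `I` is Lipschitz continuous on an open set containing `S_{λ₀}(c) ∩ Ω_δ`
    (hLip : ∃ (V : Set X) (L : ℝ≥0), IsOpen V ∧
      {x | x ∈ A ∧ Φ lam₀ x < ((c : ℝ) : EReal) ∧ φ x < ENNReal.ofReal δ} ⊆ V ∧
      (∀ x ∈ V, I x ≠ ⊤) ∧ LipschitzOnWith L (fun x => (I x).toReal) V)
    -- (ii) the rate of steepest descent of `φ` w.r.t. `A` is ≤ −a < 0 on `S_{λ₀}(c) ∩ (Ω_δ \ Ω)`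
    (hdesc : ∃ a : ℝ, 0 < a ∧
      ∀ x ∈ {x | x ∈ A ∧ Φ lam₀ x < ((c : ℝ) : EReal) ∧ φ x < ENNReal.ofReal δ} \ (M ∩ A),
        rateOfDescent (fun y => ((φ y : ℝ≥0∞) : EReal)) A x ≤ ((-a : ℝ) : EReal))
    -- (iii) `Φ_{λ₀}` is bounded below on `A`
    (hbdd : ∃ b : ℝ, ∀ x ∈ A, ((b : ℝ) : EReal) ≤ Φ lam₀ x) :
    ∃ lamStar : ℝ, 0 ≤ lamStar ∧ ∀ lam : ℝ, lamStar ≤ lam →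
      (⨅ x ∈ A, Φ lam x) = (⨅ x ∈ M ∩ A, I x) ∧
      {x | x ∈ A ∧ ∀ y ∈ A, Φ lam x ≤ Φ lam y}
        = {x | x ∈ M ∩ A ∧ ∀ y ∈ M ∩ A, I x ≤ I y} := by
  obtain ⟨V, L, hVo, hSV, hVfin, hVL⟩ := hLip
  obtain ⟨a, ha, hdesc⟩ := hdesc
  obtain ⟨b, hb⟩ := hbdd
  obtain ⟨m, hm⟩ : ∃ m : ℝ, I xs = (m : EReal) :=
    ⟨(I xs).toReal, (EReal.coe_toReal hxsfin (hInotbot xs)).symm⟩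
  rw [hm] at hc
  have hmc : m < c := by exact_mod_cast hc
  have hK1 : 0 ≤ (|m - b| + 1) / δ := by positivity
  have hK2 : 0 ≤ 2 * ((L : ℝ) + 1) / a := by positivity
  refine ⟨lam₀ + (|m - b| + 1) / δ + 2 * ((L : ℝ) + 1) / a, by linarith, fun lam hlam => ?_⟩
  have hl0 : lam₀ ≤ lam := by linarith
  have hlp : 0 < lam := by linarith
  have hl1 : |m - b| + 1 ≤ (lam - lam₀) * δ := by
    rw [← div_le_iff₀ hδ]; linarith
  have hl2 : 2 * ((L : ℝ) + 1) ≤ lam * a := by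
    rw [← div_le_iff₀ ha]; linarith
  have hΦM : ∀ x ∈ M, ∀ t, Φ t x = I x := by
    intro x hx t
    rw [hΦdef, (hφM x).2 hx]; simp
  -- points of the sublevel set
  have hB : ∀ x ∈ A, Φ lam x ≤ (m : EReal) → ∃ i q : ℝ, 0 ≤ q ∧ I x = (i : EReal) ∧
      φ x = ENNReal.ofReal q ∧ Φ lam x = ((i + lam * q : ℝ) : EReal) ∧ b ≤ i + lam * q ∧
      Φ lam₀ x < (c : EReal) ∧ φ x < ENNReal.ofReal δ := by
    intro x hxA hx
    obtain ⟨i, q, hq, hi, hp⟩ := finite_aux (I x) (hInotbot x) (φ x) lam m hlp (by rwa [← hΦdef])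
    have e1 : ∀ t, Φ t x = ((i + t * q : ℝ) : EReal) := by
      intro t; rw [hΦdef, hi, hp, coe_aux _ _ _ hq]
    have h0 := hb x hxA
    rw [e1] at h0 hx
    have h0' : b ≤ i + lam₀ * q := by exact_mod_cast h0
    have hx' : i + lam * q ≤ m := by exact_mod_cast hx
    have hlq : lam₀ * q ≤ lam * q := by gcongr
    refine ⟨i, q, hq, hi, hp, e1 lam, by linarith, ?_, ?_⟩
    · rw [e1]; exact_mod_cast (by linarith : i + lam₀ * q < c)
    · rw [hp, ENNReal.ofReal_lt_ofReal_iff hδ]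
      by_contra hcon
      push Not at hcon
      have : (lam - lam₀) * δ ≤ (lam - lam₀) * q := by
        apply mul_le_mul_of_nonneg_left hcon; linarith
      have := le_abs_self (m - b)
      nlinarith
  have hcl : ∀ r : EReal, IsClosed {x | x ∈ A ∧ Φ lam x ≤ r} := by
    intro r
    have h := penalty_lsc_aux A I hInotbot φ hIlsc hφlsc lam hlp
    obtain ⟨v, hv, hv2⟩ := lowerSemicontinuousOn_iff_preimage_Iic.1 h r
    have : {x | x ∈ A ∧ Φ lam x ≤ r} = A ∩ v := by
      rw [← hv2]; ext x; simp [hΦdef]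
    rw [this]; exact hA.inter hv
  have claim : ∀ x ∈ A, Φ lam x ≤ (m : EReal) → x ∈ M := by
    intro x0 hx0 hx0m
    by_contra hx0M
    obtain ⟨x1, ⟨hx1A, hx1m⟩, hx01, hmin⟩ := ekeland_aux {x | x ∈ A ∧ Φ lam x ≤ (m : EReal)}
      (fun x => (Φ lam x).toReal) (by
        intro r
        have : {x | x ∈ {x | x ∈ A ∧ Φ lam x ≤ (m : EReal)} ∧ (Φ lam x).toReal ≤ r}
            = {x | x ∈ A ∧ Φ lam x ≤ (m : EReal)} ∩ {x | x ∈ A ∧ Φ lam x ≤ (r : EReal)} := by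
          ext x
          constructor
          · rintro ⟨⟨h1, h2⟩, h3⟩
            refine ⟨⟨h1, h2⟩, h1, ?_⟩
            obtain ⟨i, q, -, -, -, e, -⟩ := hB x h1 h2
            rw [e] at h3 ⊢
            rw [EReal.toReal_coe] at h3
            exact_mod_cast h3
          · rintro ⟨⟨h1, h2⟩, -, h3⟩
            refine ⟨⟨h1, h2⟩, ?_⟩
            obtain ⟨i, q, -, -, -, e, -⟩ := hB x h1 h2
            rw [e] at h3 ⊢
            rw [EReal.toReal_coe]
            exact_mod_cast h3
        rw [this]
        exact (hcl _).inter (hcl _)) b (by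
        rintro x ⟨h1, h2⟩
        obtain ⟨i, q, -, -, -, e, e2, -⟩ := hB x h1 h2
        simpa only [e, EReal.toReal_coe] using e2) x0 ⟨hx0, hx0m⟩
    obtain ⟨i1, q1, hq1, hi1, hp1, e1, -, hS1, hD1⟩ := hB x1 hx1A hx1m
    obtain ⟨i0, q0, hq0, hi0, hp0, e0, -⟩ := hB x0 hx0 hx0m
    simp only [e1, e0, EReal.toReal_coe] at hx01 hmin
    have hx0m' : i0 + lam * q0 ≤ m := by rw [e0] at hx0m; exact_mod_cast hx0m
    have hx1m' : i1 + lam * q1 ≤ m := by rw [e1] at hx1m; exact_mod_cast hx1m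
    by_cases hx1M : x1 ∈ M
    · have h1 := hxsmin x1 ⟨hx1M, hx1A⟩
      rw [hm, ← hΦM x1 hx1M lam, e1] at h1
      have h1' : m ≤ i1 + lam * q1 := by exact_mod_cast h1
      have : x0 = x1 := dist_le_zero.1 (by linarith)
      exact hx0M (this ▸ hx1M)
    · have hx1V : x1 ∈ V := hSV ⟨hx1A, hS1, hD1⟩
      have hd := hdesc x1 ⟨⟨hx1A, hS1, hD1⟩, fun h => hx1M h.1⟩
      have hd' : rateOfDescent (fun y => ((φ y : ℝ≥0∞) : EReal)) A x1 < ((-(a/2) : ℝ) : EReal) :=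
        hd.trans_lt (by exact_mod_cast (by linarith : -a < -(a/2)))
      have hfr := frequently_lt_of_liminf_lt (by isBoundedDefault) hd'
      have hev : ∀ᶠ y in nhdsWithin x1 (A \ {x1}), y ∈ V ∧ y ∈ A \ {x1} :=
        inter_mem (mem_nhdsWithin_of_mem_nhds (hVo.mem_nhds hx1V)) self_mem_nhdsWithin
      obtain ⟨y, hy, hyV, hyA, hyne⟩ := (hfr.and_eventually hev).exists
      have hyne' : y ≠ x1 := hyne
      have hdp : 0 < dist y x1 := dist_pos.2 hyne'
      obtain ⟨iy, hiy⟩ : ∃ t : ℝ, I y = (t : EReal) :=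
        ⟨(I y).toReal, (EReal.coe_toReal (hVfin y hyV) (hInotbot y)).symm⟩
      have hphi1 : ((φ x1 : ℝ≥0∞) : EReal) = (q1 : EReal) := by
        rw [hp1, EReal.coe_ennreal_ofReal, max_eq_left hq1]
      have hpy : φ y ≠ ⊤ := by
        intro h
        simp only [h, hphi1, EReal.coe_ennreal_top, EReal.top_sub_coe] at hy
        rw [EReal.top_mul_coe_of_pos (by positivity)] at hy
        simp at hy
      obtain ⟨qy, hqy, hpy'⟩ : ∃ t : ℝ, 0 ≤ t ∧ φ y = ENNReal.ofReal t :=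
        ⟨(φ y).toReal, ENNReal.toReal_nonneg, (ENNReal.ofReal_toReal hpy).symm⟩
      have hphiy : ((φ y : ℝ≥0∞) : EReal) = (qy : EReal) := by
        rw [hpy', EReal.coe_ennreal_ofReal, max_eq_left hqy]
      simp only [hphi1, hphiy] at hy
      have hy' : (qy - q1) * (dist y x1)⁻¹ < -(a/2) := by exact_mod_cast hy
      rw [← div_eq_mul_inv, div_lt_iff₀ hdp] at hy'
      have hI := hVL.dist_le_mul y hyV x1 hx1V
      simp only [hiy, hi1, EReal.toReal_coe, Real.dist_eq] at hI
      have hI' := (le_abs_self _).trans hI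
      have ey : Φ lam y = ((iy + lam * qy : ℝ) : EReal) := by
        rw [hΦdef, hiy, hpy', coe_aux _ _ _ hqy]
      have h5 : lam * (qy - q1) ≤ lam * (-(a/2) * dist y x1) :=
        mul_le_mul_of_nonneg_left hy'.le hlp.le
      have h6 : 2 * ((L : ℝ) + 1) * dist y x1 ≤ lam * a * dist y x1 :=
        mul_le_mul_of_nonneg_right hl2 hdp.le
      have h7 : iy + lam * qy + dist y x1 ≤ i1 + lam * q1 := by nlinarith
      refine hyne' (hmin y ⟨hyA, ?_⟩ ?_)
      · rw [ey]; exact_mod_cast (by linarith : iy + lam * qy ≤ m)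
      · rw [ey, EReal.toReal_coe, dist_comm]; exact h7
  have hge : ∀ x ∈ A, (m : EReal) ≤ Φ lam x := by
    intro x hx
    by_contra hcon
    push Not at hcon
    have hxM := claim x hx hcon.le
    have := hxsmin x ⟨hxM, hx⟩
    rw [hΦM x hxM] at hcon
    rw [hm] at this
    exact absurd hcon this.not_gt
  have hxsΦ : Φ lam xs = (m : EReal) := by rw [hΦM xs hxs.1, hm]
  refine ⟨?_, ?_⟩
  · trans (m : EReal)
    · exact le_antisymm ((iInf₂_le xs hxs.2).trans hxsΦ.le) (le_iInf₂ hge)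
    · exact le_antisymm (le_iInf₂ fun y hy => hm ▸ hxsmin y hy) ((iInf₂_le xs hxs).trans hm.le)
  · ext x
    constructor
    · rintro ⟨hxA, hx⟩
      have h1 : Φ lam x ≤ (m : EReal) := (hx xs hxs.2).trans hxsΦ.le
      have hxM := claim x hxA h1
      rw [hΦM x hxM] at h1
      exact ⟨⟨hxM, hxA⟩, fun y hy => h1.trans (hm ▸ hxsmin y hy)⟩
    · rintro ⟨hxM, hx⟩
      refine ⟨hxM.2, fun y hy => ?_⟩
      rw [hΦM x hxM.1]
      exact ((hx xs hxs).trans hm.le).trans (hge y hy)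
end

section
/- Suppose X is complete, A is closed, I and φ are lower semicontinuous on A, φ is continuous at every point of Ω, and there exist c > I*, λ₀ > 0 and δ > 0 such that (i) I is Lipschitz continuous on an open set containing S_{λ₀}(c) ∩ Ω_δ, (ii) there exists a > 0 such that φ↓_A(x) ≤ −a for all x ∈ S_{λ₀}(c) ∩ (Ω_δ \ Ω), and (iii) Φ_{λ₀} is bounded below on A. Then for any x₀ ∈ S_{λ₀}(c) ∩ Ω there exists r > 0 such that φ(x) ≥ a·dist(x,Ω) for all x ∈ B(x₀,r) ∩ A, where B(x₀,r) = {y ∈ X : d(y,x₀) ≤ r} and dist(x,Ω) = inf_{y∈Ω} d(x,y). -/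
open Filter Metric Set Topology
open scoped ENNReal NNReal

theorem ekeland_aux_s4 {X : Type*} [MetricSpace X] [CompleteSpace X]
    (A : Set X) (hA : IsClosed A) (φ : X → ℝ≥0∞) (hφ : LowerSemicontinuousOn φ A)
    (b : ℝ≥0∞) (hb0 : b ≠ 0) (hbt : b ≠ ⊤) (x : X) (hx : x ∈ A) (hfin : φ x ≠ ⊤) :
    ∃ y ∈ A, φ y + b * edist x y ≤ φ x ∧ ∀ z ∈ A, φ z + b * edist y z ≤ φ y → z = y := by
  let T : X → Set X := fun u => {z | z ∈ A ∧ φ z + b * edist u z ≤ φ u}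
  have hself : ∀ u ∈ A, u ∈ T u := fun u hu => ⟨hu, by simp⟩
  have htrans : ∀ u v w, v ∈ T u → w ∈ T v → w ∈ T u := by
    intro u v w hv hw
    refine ⟨hw.1, ?_⟩
    calc φ w + b * edist u w ≤ φ w + b * (edist u v + edist v w) := by
          gcongr; exact edist_triangle _ _ _
      _ = (φ w + b * edist v w) + b * edist u v := by ring
      _ ≤ φ v + b * edist u v := by gcongr; exact hw.2
      _ ≤ φ u := hv.2
  have hstep : ∀ n : ℕ, ∀ u : A, ∃ v : A, (v : X) ∈ T u ∧
      (φ u ≠ ⊤ → ∀ z ∈ T u, φ v ≤ φ z + b * (2⁻¹ : ℝ≥0∞) ^ n) := by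
    intro n u
    by_cases hu : φ u = ⊤
    · exact ⟨u, hself u u.2, fun h => absurd hu h⟩
    have hinf : (⨅ z ∈ T u, φ z) ≠ ⊤ :=
      ne_top_of_le_ne_top hu (iInf₂_le (u : X) (hself u u.2))
    have hpos : b * (2⁻¹ : ℝ≥0∞) ^ n ≠ 0 := by
      refine mul_ne_zero hb0 (pow_ne_zero _ (by simp))
    have hlt : (⨅ z ∈ T u, φ z) < (⨅ z ∈ T u, φ z) + b * (2⁻¹ : ℝ≥0∞) ^ n :=
      ENNReal.lt_add_right hinf hpos
    obtain ⟨v, hv, hlt'⟩ := by simpa only [iInf_lt_iff, exists_prop] using hlt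
    refine ⟨⟨v, hv.1⟩, hv, fun _ z hz => hlt'.le.trans ?_⟩
    gcongr
    exact iInf₂_le z hz
  choose F hF1 hF2 using hstep
  let u : ℕ → A := fun n => Nat.rec (motive := fun _ => A) ⟨x, hx⟩ (fun k v => F k v) n
  have hus : ∀ n, u (n + 1) = F n (u n) := fun n => rfl
  have hmem : ∀ n m, n ≤ m → (u m : X) ∈ T (u n) := by
    intro n m h
    induction m, h using Nat.le_induction with
    | base => exact hself _ (u n).2
    | succ k _ ih => exact htrans _ _ _ ih (by rw [hus]; exact hF1 _ _)
  have hufin : ∀ n, φ (u n) ≠ ⊤ := fun n =>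
    ne_top_of_le_ne_top hfin (le_self_add.trans (hmem 0 n (Nat.zero_le _)).2)
  have hsmall : ∀ n, ∀ z ∈ T (u (n + 1)), edist (u (n + 1) : X) z ≤ (2⁻¹ : ℝ≥0∞) ^ n := by
    intro n z hz
    have h1 : z ∈ T (u n) := htrans _ _ _ (hmem n (n + 1) (Nat.le_succ n)) hz
    have h2 := hF2 n (u n) (hufin n) z h1
    rw [← hus] at h2
    have h3 := hz.2.trans h2
    have hzf : φ z ≠ ⊤ := ne_top_of_le_ne_top (hufin (n + 1)) (le_self_add.trans hz.2)
    have h4 := (ENNReal.add_le_add_iff_left hzf).1 h3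
    exact (ENNReal.mul_le_mul_iff_right hb0 hbt).1 h4
  have htend0 : Tendsto (fun n : ℕ => (2⁻¹ : ℝ≥0∞) ^ n) atTop (𝓝 0) :=
    ENNReal.tendsto_pow_atTop_nhds_zero_of_lt_one (by simp)
  have hcau : CauchySeq (fun n => (u (n + 1) : X)) := by
    refine cauchySeq_of_edist_le_geometric 2⁻¹ 1 (by simp) (by simp) (fun n => ?_)
    simpa using hsmall n _ (hmem (n + 1) (n + 2) (Nat.le_succ _))
  obtain ⟨y, hy⟩ := cauchySeq_tendsto_of_complete hcau
  have hyA : y ∈ A := hA.mem_of_tendsto hy (Eventually.of_forall fun n => (u (n + 1)).2)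
  have hyT : ∀ n, y ∈ T (u n) := by
    intro n
    refine ⟨hyA, ?_⟩
    by_contra! hcon
    have hlsc : LowerSemicontinuousWithinAt (fun z => φ z + b * edist (u n : X) z) A y := by
      refine LowerSemicontinuousWithinAt.add (hφ y hyA) ?_
      refine Continuous.lowerSemicontinuous ?_ |>.lowerSemicontinuousWithinAt _ _
      exact (ENNReal.continuous_const_mul hbt).comp (by fun_prop)
    have hev := hlsc _ hcon
    have hy' : Tendsto (fun n => (u (n + 1) : X)) atTop (𝓝[A] y) :=
      tendsto_nhdsWithin_iff.2 ⟨hy, Eventually.of_forall fun n => (u (n + 1)).2⟩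
    obtain ⟨k, hk, hkn⟩ := ((hy'.eventually hev).and (eventually_ge_atTop n)).exists
    exact absurd (hmem n (k + 1) (by omega)).2 (not_le.2 hk)
  refine ⟨y, hyA, (hyT 0).2, fun z hz hzy => ?_⟩
  have hzT : ∀ n, z ∈ T (u n) := fun n => htrans _ _ _ (hyT n) ⟨hz, hzy⟩
  refine tendsto_nhds_unique (f := fun n => (u (n + 1) : X)) ?_ hy
  rw [tendsto_iff_edist_tendsto_0]
  exact tendsto_of_tendsto_of_tendsto_of_le_of_le tendsto_const_nhds htend0
    (fun _ => zero_le) (fun n => hsmall n z (hzT (n + 1)))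

theorem descent_aux {X : Type*} [MetricSpace X] (A : Set X) (φ : X → ℝ≥0∞) (y : X)
    (hfin : φ y ≠ ⊤) (a b : ℝ) (hb : 0 < b) (hba : b < a)
    (h : rateOfDescent (fun y => ((φ y : ℝ≥0∞) : EReal)) A y ≤ ((-a : ℝ) : EReal)) :
    ∃ z ∈ A, z ≠ y ∧ φ z + ENNReal.ofReal b * edist y z ≤ φ y := by
  have hlt : rateOfDescent (fun y => ((φ y : ℝ≥0∞) : EReal)) A y < ((-b : ℝ) : EReal) :=
    h.trans_lt (by exact_mod_cast neg_lt_neg hba)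
  have hfr := frequently_lt_of_liminf_lt (by isBoundedDefault) hlt
  obtain ⟨z, hz, hzA, hzy⟩ := (hfr.and_eventually self_mem_nhdsWithin).exists
  have hzy' : z ≠ y := hzy
  refine ⟨z, hzA, hzy', ?_⟩
  have hd : 0 < dist z y := dist_pos.2 hzy'
  lift φ y to ℝ≥0 using hfin with q hq
  have hzf : φ z ≠ ⊤ := by
    intro ht
    rw [ht] at hz
    have h1 : ((⊤ : ℝ≥0∞) : EReal) - ((q : ℝ≥0∞) : EReal) = ⊤ := by
      rw [EReal.coe_ennreal_top]; exact EReal.top_sub_coe (q : ℝ)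
    rw [h1, EReal.top_mul_coe_of_pos (inv_pos.2 hd)] at hz
    exact absurd hz (not_lt.2 le_top)
  lift φ z to ℝ≥0 using hzf with p hp
  have hz' : ((p : ℝ) - (q : ℝ)) * (dist z y)⁻¹ < -b := by
    have : ((((p : ℝ) - (q : ℝ)) * (dist z y)⁻¹ : ℝ) : EReal) < ((-b : ℝ) : EReal) := by
      refine lt_of_eq_of_lt ?_ hz
      rw [EReal.coe_mul, EReal.coe_sub]
      rfl
    exact_mod_cast this
  rw [← div_eq_mul_inv, div_lt_iff₀ hd] at hz'
  rw [edist_dist, ← ENNReal.ofReal_mul hb.le, ← ENNReal.ofReal_coe_nnreal (p := p),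
    ← ENNReal.ofReal_coe_nnreal (p := q), ← ENNReal.ofReal_add p.coe_nonneg (by positivity)]
  apply ENNReal.ofReal_le_ofReal
  rw [dist_comm y z]
  linarith

/-- Lemma A.1 (metric subregularity): under the assumptions of the main theorem, for any
`x₀ ∈ S_{λ₀}(c) ∩ Ω` there exists `r > 0` such that `φ(x) ≥ a · dist(x, Ω)` for all
`x ∈ B(x₀, r) ∩ A`. -/
theorem exact_penalty_metric_subregularity
    {X : Type*} [MetricSpace X] [CompleteSpace X]
    (M A : Set X) (hA : IsClosed A)
    (I : X → EReal) (hInotbot : ∀ x, I x ≠ ⊥)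
    (φ : X → ℝ≥0∞) (hφM : ∀ x, φ x = 0 ↔ x ∈ M)
    (Φ : ℝ → X → EReal)
    (hΦdef : ∀ lam x, Φ lam x = I x + (lam : EReal) * ((φ x : ℝ≥0∞) : EReal))
    (hIlsc : LowerSemicontinuousOn I A) (hφlsc : LowerSemicontinuousOn φ A)
    (hφcont : ∀ x ∈ M ∩ A, ContinuousAt φ x)
    -- the problem (P) has a globally optimal solution with finite optimal value
    (xs : X) (hxs : xs ∈ M ∩ A) (hxsmin : ∀ y ∈ M ∩ A, I xs ≤ I y) (hxsfin : I xs ≠ ⊤)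
    (c lam₀ δ : ℝ) (hc : I xs < ((c : ℝ) : EReal)) (hlam₀ : 0 < lam₀) (hδ : 0 < δ)
    -- (i) `I` is Lipschitz continuous on an open set containing `S_{λ₀}(c) ∩ Ω_δ`
    (hLip : ∃ (V : Set X) (L : ℝ≥0), IsOpen V ∧
      {x | x ∈ A ∧ Φ lam₀ x < ((c : ℝ) : EReal) ∧ φ x < ENNReal.ofReal δ} ⊆ V ∧
      (∀ x ∈ V, I x ≠ ⊤) ∧ LipschitzOnWith L (fun x => (I x).toReal) V)
    -- (ii) the rate of steepest descent of `φ` w.r.t. `A` is ≤ −a < 0 on `S_{λ₀}(c) ∩ (Ω_δ \ Ω)`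
    (a : ℝ) (ha : 0 < a)
    (hdesc : ∀ x ∈ {x | x ∈ A ∧ Φ lam₀ x < ((c : ℝ) : EReal) ∧ φ x < ENNReal.ofReal δ} \ (M ∩ A),
        rateOfDescent (fun y => ((φ y : ℝ≥0∞) : EReal)) A x ≤ ((-a : ℝ) : EReal))
    -- (iii) `Φ_{λ₀}` is bounded below on `A`
    (hbdd : ∃ b : ℝ, ∀ x ∈ A, ((b : ℝ) : EReal) ≤ Φ lam₀ x) :
    ∀ x₀ ∈ {x | x ∈ A ∧ Φ lam₀ x < ((c : ℝ) : EReal) ∧ φ x < ENNReal.ofReal δ} ∩ (M ∩ A),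
      ∃ r : ℝ, 0 < r ∧ ∀ x ∈ Metric.closedBall x₀ r ∩ A,
        ENNReal.ofReal (a * Metric.infDist x (M ∩ A)) ≤ φ x := by
  rintro x₀ ⟨⟨hx₀A, hx₀c, hx₀δ⟩, hx₀M, -⟩
  obtain ⟨V, L, hVo, hSV, hVt, hVL⟩ := hLip
  have hx₀V : x₀ ∈ V := hSV ⟨hx₀A, hx₀c, hx₀δ⟩
  have hφ0 : φ x₀ = 0 := (hφM x₀).2 hx₀M
  have hφc := hφcont x₀ ⟨hx₀M, hx₀A⟩
  have hcoe : ∀ x ∈ V, I x = (((I x).toReal : ℝ) : EReal) := fun x hx =>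
    (EReal.coe_toReal (hVt x hx) (hInotbot x)).symm
  have hIc : ContinuousAt (fun x => (I x).toReal) x₀ :=
    hVL.continuousOn.continuousAt (hVo.mem_nhds hx₀V)
  have hφr : ContinuousAt (fun x => (φ x).toReal) x₀ :=
    (ENNReal.tendsto_toReal (by simp [hφ0])).comp hφc
  have hsum : ContinuousAt (fun x => (I x).toReal + lam₀ * (φ x).toReal) x₀ :=
    hIc.add (continuousAt_const.mul hφr)
  have hΦr : ∀ x ∈ V, φ x ≠ ⊤ →
      Φ lam₀ x = (((I x).toReal + lam₀ * (φ x).toReal : ℝ) : EReal) := by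
    intro x hx hf
    rw [hΦdef, EReal.coe_add, EReal.coe_mul, ← hcoe x hx]
    lift φ x to ℝ≥0 using hf with p hp
    rfl
  have hx₀c' : (I x₀).toReal + lam₀ * (φ x₀).toReal < c := by
    rw [hΦr x₀ hx₀V (by simp [hφ0])] at hx₀c
    exact_mod_cast hx₀c
  have hev : ∀ᶠ x in 𝓝 x₀, x ∈ V ∧ φ x < ENNReal.ofReal δ ∧
      (I x).toReal + lam₀ * (φ x).toReal < c :=
    (hVo.eventually_mem hx₀V).and ((hφc.eventually (gt_mem_nhds hx₀δ)).and
      (hsum.eventually (gt_mem_nhds hx₀c')))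
  obtain ⟨ρ, hρ, hball⟩ := Metric.eventually_nhds_iff.1 hev
  refine ⟨ρ / 3, by positivity, ?_⟩
  rintro x ⟨hxB, hxA⟩
  rw [Metric.mem_closedBall] at hxB
  by_contra! hcon
  have hφx : φ x ≠ ⊤ := hcon.ne_top
  set d := Metric.infDist x (M ∩ A) with hd
  have hconr : (φ x).toReal < a * d := by
    rw [← ENNReal.ofReal_toReal hφx] at hcon
    exact (ENNReal.ofReal_lt_ofReal_iff_of_nonneg ENNReal.toReal_nonneg).1 hcon
  have hdpos : 0 < d := by
    have : 0 < a * d := lt_of_le_of_lt ENNReal.toReal_nonneg hconr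
    exact pos_of_mul_pos_right this ha.le
  obtain ⟨b, hb1, hba⟩ := exists_between ((div_lt_iff₀ hdpos).2 hconr)
  have hb : 0 < b := lt_of_le_of_lt (by positivity) hb1
  rw [div_lt_iff₀ hdpos] at hb1
  obtain ⟨y, hyA, hy1, hy2⟩ := ekeland_aux_s4 A hA φ hφlsc (ENNReal.ofReal b)
    (by simpa using hb) ENNReal.ofReal_ne_top x hxA hφx
  have hxy : dist x y < d := by
    have h1 : ENNReal.ofReal b * edist x y ≤ φ x := le_add_self.trans hy1
    rw [edist_dist, ← ENNReal.ofReal_mul hb.le, ENNReal.ofReal_le_iff_le_toReal hφx] at h1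
    exact lt_of_mul_lt_mul_left (h1.trans_lt hb1) hb.le
  have hyΩ : y ∉ M ∩ A := fun h => absurd (Metric.infDist_le_dist_of_mem h) (not_le.2 hxy)
  have hdr : d ≤ ρ / 3 := (Metric.infDist_le_dist_of_mem (show x₀ ∈ M ∩ A from ⟨hx₀M, hx₀A⟩)).trans hxB
  have hyρ : dist y x₀ < ρ := by
    have := dist_triangle y x x₀
    rw [dist_comm y x] at this
    linarith
  obtain ⟨hyV, hyδ, hyc⟩ := hball hyρ
  have hyf : φ y ≠ ⊤ := hyδ.ne_top
  have hrate := hdesc y ⟨⟨hyA, by rw [hΦr y hyV hyf]; exact_mod_cast hyc, hyδ⟩, hyΩ⟩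
  obtain ⟨z, hzA, hzy, hz⟩ := descent_aux A φ y hyf a b hb hba hrate
  exact hzy (hy2 z hzA hz)
end
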